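/- Let k ≥ 2 and let G be a finite k-connected simple graph of order n ≥ 4. Then G is k-color connectable and cc_k(G) = k. -/

import Mathlib

open SimpleGraph

/-- `c` is a `k`-color connecting edge-coloring of `G`: between every pair of distinct
vertices there is a path whose edges use at least `k` different colors. -/
def SimpleGraph.IsKColorConnecting {V : Type*} (G : SimpleGraph V) (k : ℕ)
    (c : Sym2 V → ℕ) : Prop :=
  ∀ u v : V, u ≠ v → ∃ p : G.Walk u v, p.IsPath ∧ k ≤ (p.edges.map c).toFinset.card

/-- `G` is `k`-color connectable: it admits a `k`-color connecting coloring. -/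
def SimpleGraph.KColorConnectable {V : Type*} (G : SimpleGraph V) (k : ℕ) : Prop :=
  ∃ c : Sym2 V → ℕ, G.IsKColorConnecting k c

/-- The `k`-color connection number `cc_k(G)`: the minimum number of colors used on the
edges of `G` by a `k`-color connecting coloring. -/
noncomputable def SimpleGraph.ccConn {V : Type*} (G : SimpleGraph V) (k : ℕ) : ℕ :=
  sInf {n : ℕ | ∃ c : Sym2 V → ℕ, G.IsKColorConnecting k c ∧ (c '' G.edgeSet).ncard = n}

/-- A graph is `k`-connected if it has more than `k` vertices and remains connected after
deleting any set of fewer than `k` vertices. -/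
def SimpleGraph.IsKConnectedGraph {V : Type*} (G : SimpleGraph V) (k : ℕ) : Prop :=
  k < Nat.card V ∧ ∀ S : Set V, S.Finite → S.ncard < k → (G.induce Sᶜ).Connected

/-- There is a path from `u` to `v` inside `S` seeing all the colors of `K`. -/
def Pth {V : Type*} (G : SimpleGraph V) (col : Sym2 V → ℕ) (u v : V) (S : Set V) (K : Set ℕ) :
    Prop :=
  ∃ p : G.Walk u v, p.IsPath ∧ (∀ x ∈ p.support, x ∈ S) ∧ ∀ k ∈ K, ∃ e ∈ p.edges, col e = k

theorem Pth.mono {V : Type*} {G : SimpleGraph V} {col : Sym2 V → ℕ} {u v : V} {S T : Set V}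
    {K M : Set ℕ} (h : Pth G col u v S K) (hS : S ⊆ T) (hK : M ⊆ K) : Pth G col u v T M := by
  obtain ⟨p, h1, h2, h3⟩ := h
  exact ⟨p, h1, fun x hx => hS (h2 x hx), fun k hk => h3 k (hK hk)⟩

theorem Pth.symm {V : Type*} {G : SimpleGraph V} {col : Sym2 V → ℕ} {u v : V} {S : Set V}
    {K : Set ℕ} (h : Pth G col u v S K) : Pth G col v u S K := by
  obtain ⟨p, h1, h2, h3⟩ := h
  refine ⟨p.reverse, h1.reverse, ?_, ?_⟩
  · intro x hx
    exact h2 x (by simpa using hx)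
  · intro k hk
    obtain ⟨e, he, hc⟩ := h3 k hk
    exact ⟨e, by simpa using he, hc⟩

theorem Pth.glue {V : Type*} {G : SimpleGraph V} {col : Sym2 V → ℕ} {u v w : V} {S T : Set V}
    {K M : Set ℕ} (h : Pth G col u v S K) (h' : Pth G col v w T M)
    (hd : ∀ x ∈ S, x ∈ T → x = v) : Pth G col u w (S ∪ T) (K ∪ M) := by
  obtain ⟨p, h1, h2, h3⟩ := h
  obtain ⟨q, g1, g2, g3⟩ := h'
  refine ⟨p.append q, ?_, ?_, ?_⟩
  · rw [Walk.isPath_def, Walk.support_append, List.nodup_append']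
    have hq : (v :: q.support.tail).Nodup := by
      rw [Walk.cons_tail_support]; exact g1.support_nodup
    refine ⟨h1.support_nodup, (List.nodup_cons.1 hq).2, ?_⟩
    intro x hx hx'
    have := hd x (h2 x hx) (g2 x (List.mem_of_mem_tail hx'))
    subst this
    exact (List.nodup_cons.1 hq).1 hx'
  · intro x hx
    rw [Walk.mem_support_append_iff] at hx
    exact hx.imp (h2 x) (g2 x)
  · rintro k (hk | hk)
    · obtain ⟨e, he, hc⟩ := h3 k hk
      exact ⟨e, by simp [he], hc⟩
    · obtain ⟨e, he, hc⟩ := g3 k hk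
      exact ⟨e, by simp [he], hc⟩

theorem Pth.seg {V : Type*} {G : SimpleGraph V} {col : Sym2 V → ℕ} (q : ℕ → V) (a b : ℕ)
    (hab : a ≤ b) (hadj : ∀ x, a ≤ x → x < b → G.Adj (q x) (q (x + 1)))
    (hinj : ∀ x y, a ≤ x → x ≤ b → a ≤ y → y ≤ b → q x = q y → x = y) :
    Pth G col (q a) (q b) {v | ∃ x, a ≤ x ∧ x ≤ b ∧ v = q x}
      {k | ∃ x, a ≤ x ∧ x < b ∧ k = col s(q x, q (x + 1))} := by
  induction b, hab using Nat.le_induction with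
  | base =>
    refine ⟨Walk.nil, by simp, ?_, ?_⟩
    · intro x hx
      refine ⟨a, le_rfl, le_rfl, by simpa using hx⟩
    · rintro k ⟨x, h1, h2, -⟩
      omega
  | succ b hab ih =>
    have h1 := ih (fun x h1 h2 => hadj x h1 (by omega))
      (fun x y h1 h2 h3 h4 => hinj x y h1 (by omega) h3 (by omega))
    have h2 : Pth G col (q b) (q (b+1)) {q b, q (b+1)} {col s(q b, q (b+1))} := by
      have ha := hadj b hab (by omega)
      refine ⟨Walk.cons ha Walk.nil, ?_, ?_, ?_⟩
      · simp [ha.ne]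
      · simp
      · simp
    refine (h1.glue h2 ?_).mono ?_ ?_
    · rintro x ⟨y, hy1, hy2, rfl⟩ (h | h)
      · exact h
      · have := hinj y (b+1) hy1 (by omega) (by omega) le_rfl h
        omega
    · rintro x (⟨y, hy1, hy2, rfl⟩ | rfl | rfl)
      · exact ⟨y, hy1, by omega, rfl⟩
      · exact ⟨b, hab, by omega, rfl⟩
      · exact ⟨b+1, by omega, by omega, rfl⟩
    · rintro k ⟨x, h1, h2, rfl⟩
      rcases Nat.lt_or_ge x b with h | h
      · left; exact ⟨x, h1, h, rfl⟩
      · right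
        have : x = b := by omega
        subst this; rfl

theorem boundary {V : Type*} {G : SimpleGraph V} {S : Set V}
    (h : (G.induce Sᶜ).Connected) (Z : Set V) {x y : V} (hx : x ∈ Z) (hy : y ∉ Z)
    (hxS : x ∉ S) (hyS : y ∉ S) : ∃ a b, a ∈ Z ∧ b ∉ Z ∧ b ∉ S ∧ G.Adj a b := by
  obtain ⟨p⟩ := h.preconnected ⟨x, hxS⟩ ⟨y, hyS⟩
  obtain ⟨d, -, h1, h2⟩ := p.exists_boundary_dart (Subtype.val ⁻¹' Z) hx hy
  exact ⟨d.fst, d.snd, h1, h2, d.snd.2, d.adj⟩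

theorem link {V : Type*} [Fintype V] (G : SimpleGraph V) (C : Set V) {ι : Type*}
    (N : ι → Set V)
    (hall : ∀ (J : Finset ι) (X : Finset V), (∀ x ∈ X, x ∉ C) → J.Nonempty →
      ∃ W : Finset V, J.card + X.card ≤ W.card ∧
        ∀ w ∈ W, (∃ j ∈ J, w ∈ N j) ∨ w ∈ X ∨ ∃ x ∈ X, G.Adj x w) :
    ∃ (q : ι → ℕ → V) (m : ι → ℕ), (∀ i, q i 0 ∈ N i) ∧ (∀ i, q i (m i) ∈ C) ∧
      (∀ i x, x < m i → q i x ∉ C ∧ G.Adj (q i x) (q i (x + 1))) ∧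
      ∀ i j x y, x ≤ m i → y ≤ m j → q i x = q j y → i = j ∧ x = y := by
  classical
  let R : ι ⊕ {v // v ∉ C} → V → Prop := fun a w =>
    match a with
    | .inl i => w ∈ N i
    | .inr v => w = v.1 ∨ G.Adj v.1 w
  obtain ⟨f, finj, fR⟩ := (Fintype.all_card_le_filter_rel_iff_exists_injective R).1 (by
    intro A
    have hA : A.card = A.toLeft.card + (A.toRight.map (Function.Embedding.subtype _)).card := by
      rw [Finset.card_map, Finset.card_toLeft_add_card_toRight]
    rw [hA]
    set X := A.toRight.map (Function.Embedding.subtype _) with hX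
    have hXm : ∀ x, x ∈ X ↔ ∃ h : x ∉ C, Sum.inr ⟨x, h⟩ ∈ A := by
      intro x; simp [hX]
    rcases A.toLeft.eq_empty_or_nonempty with h0 | h0
    · rw [h0, Finset.card_empty, zero_add]
      apply Finset.card_le_card
      intro x hx
      obtain ⟨h, hx⟩ := (hXm x).1 hx
      simp only [Finset.mem_filter, Finset.mem_univ, true_and]
      exact ⟨_, hx, Or.inl rfl⟩
    · obtain ⟨W, hW, hW'⟩ := hall A.toLeft X (fun x hx => ((hXm x).1 hx).1) h0
      refine hW.trans (Finset.card_le_card ?_)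
      intro w hw
      simp only [Finset.mem_filter, Finset.mem_univ, true_and]
      rcases hW' w hw with ⟨j, hj, hn⟩ | h | ⟨x, hx, hadj⟩
      · exact ⟨.inl j, by simpa using hj, hn⟩
      · obtain ⟨h, hx⟩ := (hXm w).1 h
        exact ⟨_, hx, Or.inl rfl⟩
      · obtain ⟨h, hx⟩ := (hXm x).1 hx
        exact ⟨_, hx, Or.inr hadj⟩)
  let q : ι → ℕ → V := fun i n => Nat.rec (f (.inl i))
    (fun _ v => if h : v ∉ C then f (.inr ⟨v, h⟩) else v) n
  have q0 : ∀ i, q i 0 = f (.inl i) := fun i => rfl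
  have qs : ∀ i x (h : q i x ∉ C), q i (x+1) = f (.inr ⟨q i x, h⟩) := by
    intro i x h
    change (if h : q i x ∉ C then f (.inr ⟨q i x, h⟩) else q i x) = _
    rw [dif_pos h]
  have key : ∀ x y i j, (∀ z < x, q i z ∉ C) → (∀ z < y, q j z ∉ C) → q i x = q j y →
      i = j ∧ x = y := by
    intro x
    induction x with
    | zero =>
      intro y i j h1 h2 h
      cases y with
      | zero =>
        rw [q0, q0] at h
        exact ⟨Sum.inl.inj (finj h), rfl⟩
      | succ y =>
        rw [q0, qs j y (h2 y (by omega))] at h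
        exact absurd (finj h) (by simp)
    | succ x ih =>
      intro y i j h1 h2 h
      cases y with
      | zero =>
        rw [q0, qs i x (h1 x (by omega))] at h
        exact absurd (finj h) (by simp)
      | succ y =>
        rw [qs j y (h2 y (by omega)), qs i x (h1 x (by omega))] at h
        have := Sum.inr.inj (finj h)
        have := ih y i j (fun z hz => h1 z (by omega)) (fun z hz => h2 z (by omega))
          (congrArg Subtype.val this)
        exact ⟨this.1, by omega⟩
  have term : ∀ i, ∃ x, q i x ∈ C := by
    intro i
    by_contra hcon
    push Not at hcon
    have : Function.Injective (q i) := fun x y h =>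
      (key x y i i (fun z _ => hcon z) (fun z _ => hcon z) h).2
    exact not_injective_infinite_finite _ this
  refine ⟨q, fun i => Nat.find (term i), fun i => fR (.inl i), fun i => Nat.find_spec (term i),
    ?_, ?_⟩
  · intro i x hx
    beta_reduce at hx
    have h := Nat.find_min (term i) hx
    refine ⟨h, ?_⟩
    have h' := fR (.inr ⟨q i x, h⟩)
    rw [← qs] at h'
    rcases h' with h' | h'
    · have h' : q i (x+1) = q i x := h'
      have := key (x+1) x i i (fun z hz => Nat.find_min (term i) (by lia))
        (fun z hz => Nat.find_min (term i) (by lia)) h'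
      omega
    · exact h'
  · intro i j x y hx hy h
    beta_reduce at hx hy
    exact key x y i j (fun z hz => Nat.find_min (term i) (by lia))
        (fun z hz => Nat.find_min (term j) (by lia)) h

theorem link2 {V : Type*} [Fintype V] {G : SimpleGraph V} (col : Sym2 V → ℕ)
    (h2 : ∀ S : Set V, S.ncard < 2 → (G.induce Sᶜ).Connected) (H : Set V)
    {a b : V} (ha : a ∈ H) (hb : b ∈ H) (hab : a ≠ b) {u v : V} (huv : u ≠ v) :
    ∃ (h h' : V) (S S' : Set V) (K K' : Set ℕ), h ∈ H ∧ h' ∈ H ∧ h ≠ h' ∧ Pth G col u h S K ∧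
      Pth G col v h' S' K' ∧ (∀ x ∈ S, x ∈ H → x = h) ∧ (∀ x ∈ S', x ∈ H → x = h') ∧
      (∀ x ∈ S, x ∉ S') ∧
      (u ∉ H → ∃ a b, a ∉ H ∧ b ∈ H ∧ col s(a, b) ∈ K) ∧
      (v ∉ H → ∃ a b, a ∉ H ∧ b ∈ H ∧ col s(a, b) ∈ K') := by
  classical
  obtain ⟨q, m, h0, hC, hadj, hinj⟩ := link G H (fun i : Bool => {w | w = if i then u else v}) (by
    intro J X hX hJ
    have hJ2 : J.card ≤ 2 := by simpa using Finset.card_le_univ J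
    let W : Finset V := {w | (∃ j ∈ J, w = if j then u else v) ∨ w ∈ X ∨ ∃ x ∈ X, G.Adj x w}
    have hW : ∀ w, w ∈ W ↔ (∃ j ∈ J, w = if j then u else v) ∨ w ∈ X ∨ ∃ x ∈ X, G.Adj x w := by
      intro w; simp [W]
    refine ⟨W, ?_, fun w hw => (hW w).1 hw⟩
    rcases X.eq_empty_or_nonempty with rfl | ⟨x, hx⟩
    · have : J.card = (J.image (fun j : Bool => if j then u else v)).card := by
        rw [Finset.card_image_of_injective]
        intro i j h
        cases i <;> cases j <;> simp_all
      rw [this, Finset.card_empty, add_zero]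
      apply Finset.card_le_card
      intro w hw
      rw [Finset.mem_image] at hw
      obtain ⟨j, hj, rfl⟩ := hw
      exact (hW _).2 (Or.inl ⟨j, hj, rfl⟩)
    · have hXW : X ⊆ W := fun y hy => (hW y).2 (Or.inr (Or.inl hy))
      have hcard := Finset.card_sdiff_add_card_eq_card hXW
      by_contra hcon
      have hlt : (W \ X).card < 2 := by omega
      have hconn := h2 (↑(W \ X)) (by rwa [Set.ncard_coe_finset])
      have : ∃ y, y ∈ H ∧ y ∉ (W \ X) := by
        by_contra hno
        push Not at hno
        have := Finset.one_lt_card.2 ⟨a, hno a ha, b, hno b hb, hab⟩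
        omega
      obtain ⟨y, hyH, hy⟩ := this
      obtain ⟨e, g, he, hg, hgS, hadj⟩ := boundary hconn (X : Set V) (x := x) (y := y) hx
        (fun h => hX y h hyH) (by simp [hx]) (by simpa using hy)
      apply hgS
      simp only [Finset.coe_sdiff, Set.mem_sdiff]
      exact ⟨(hW g).2 (Or.inr (Or.inr ⟨e, he, hadj⟩)), hg⟩)
  have hu : q true 0 = u := by simpa using h0 true
  have hv : q false 0 = v := by simpa using h0 false
  have sg := fun i => Pth.seg (G := G) (col := col) (q i) 0 (m i) (Nat.zero_le _)
    (fun x _ hx => (hadj i x hx).2) (fun x y _ hx _ hy h => (hinj i i x y hx hy h).2)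
  have s1 := sg true
  have s2 := sg false
  rw [hu] at s1
  rw [hv] at s2
  refine ⟨_, _, _, _, _, _, hC true, hC false, ?_, s1, s2, ?_, ?_, ?_, ?_, ?_⟩
  · intro h
    exact absurd (hinj _ _ _ _ le_rfl le_rfl h).1 (by simp)
  · rintro x ⟨y, -, hy, rfl⟩ hx
    rcases hy.lt_or_eq with h | rfl
    · exact absurd hx (hadj _ _ h).1
    · rfl
  · rintro x ⟨y, -, hy, rfl⟩ hx
    rcases hy.lt_or_eq with h | rfl
    · exact absurd hx (hadj _ _ h).1
    · rfl
  · rintro x ⟨y, -, hy, rfl⟩ ⟨z, -, hz, hyz⟩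
    exact absurd (hinj _ _ _ _ hy hz hyz).1 (by simp)
  · intro huH
    have hm : m true ≠ 0 := fun h => huH (by rw [← hu, ← h]; exact hC true)
    refine ⟨q true (m true - 1), q true (m true - 1 + 1), (hadj _ _ (by omega)).1, ?_,
      m true - 1, by omega, by omega, rfl⟩
    rw [show m true - 1 + 1 = m true by omega]
    exact hC true
  · intro huH
    have hm : m false ≠ 0 := fun h => huH (by rw [← hv, ← h]; exact hC false)
    refine ⟨q false (m false - 1), q false (m false - 1 + 1), (hadj _ _ (by omega)).1, ?_,
      m false - 1, by omega, by omega, rfl⟩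
    rw [show m false - 1 + 1 = m false by omega]
    exact hC false

theorem extend {V : Type*} [Fintype V] {G : SimpleGraph V} (col : Sym2 V → ℕ)
    (h2 : ∀ S : Set V, S.ncard < 2 → (G.induce Sᶜ).Connected) (H : Set V)
    {a b : V} (ha : a ∈ H) (hb : b ∈ H) (hab : a ≠ b) (M : Set ℕ)
    (hH : ∀ x y, x ∈ H → y ∈ H → x ≠ y → Pth G col x y H M) {u v : V} (huv : u ≠ v) :
    Pth G col u v Set.univ M := by
  obtain ⟨h, h', S, S', K, K', hh, hh', hne, p1, p2, e1, e2, hd, -, -⟩ :=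
    link2 col h2 H ha hb hab huv
  refine ((p1.glue (hH h h' hh hh' hne) e1).glue p2.symm ?_).mono (Set.subset_univ _) ?_
  · rintro x (hx | hx) hx'
    · exact absurd hx' (hd x hx)
    · exact e2 x hx' hx
  · intro k hk
    exact Or.inl (Or.inr hk)

theorem twoCase {V : Type*} [Fintype V] {G : SimpleGraph V} (col : Sym2 V → ℕ)
    (h2 : ∀ S : Set V, S.ncard < 2 → (G.induce Sᶜ).Connected)
    {a b : V} (hab : G.Adj a b) (h0 : col s(a, b) = 0)
    (h1 : ∀ x y, x ∉ ({a, b} : Set V) → y ∈ ({a, b} : Set V) → col s(x, y) = 1)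
    {u v : V} (huv : u ≠ v) (hn : ¬ (u ∈ ({a, b} : Set V) ∧ v ∈ ({a, b} : Set V))) :
    Pth G col u v Set.univ {n | n < 2} := by
  obtain ⟨h, h', S, S', K, K', hh, hh', hne, p1, p2, e1, e2, hd, c1, c2⟩ :=
    link2 (u := u) (v := v) col h2 {a, b} (a := a) (b := b) (by simp) (by simp) hab.ne huv
  have hK : 1 ∈ K ∨ 1 ∈ K' := by
    by_cases hu : u ∈ ({a, b} : Set V)
    · obtain ⟨x, y, hx, hy, hc⟩ := c2 (fun hv => hn ⟨hu, hv⟩)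
      rw [h1 x y hx hy] at hc
      exact Or.inr hc
    · obtain ⟨x, y, hx, hy, hc⟩ := c1 hu
      rw [h1 x y hx hy] at hc
      exact Or.inl hc
  have hadj : G.Adj h h' ∧ col s(h, h') = 0 := by
    rcases hh with rfl | rfl <;> rcases hh' with rfl | rfl
    · exact absurd rfl hne
    · exact ⟨hab, h0⟩
    · exact ⟨hab.symm, by rw [Sym2.eq_swap]; exact h0⟩
    · exact absurd rfl hne
  have pm : Pth G col h h' {h, h'} {0} :=
    ⟨Walk.cons hadj.1 Walk.nil, by simp [hne], by simp, by simp [hadj.2]⟩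
  refine ((p1.glue pm ?_).glue p2.symm ?_).mono (Set.subset_univ _) ?_
  · rintro x hx (rfl | rfl)
    · rfl
    · exact e1 _ hx hh'
  · rintro x (hx | hx) hx'
    · exact absurd hx' (hd x hx)
    · rcases hx with rfl | rfl
      · exact e2 _ hx' hh
      · rfl
  · intro k hk
    have hk : k < 2 := hk
    interval_cases k
    · exact Or.inl (Or.inr rfl)
    · rcases hK with h | h
      · exact Or.inl (Or.inl h)
      · exact Or.inr h

theorem caseTwo {V : Type*} [Fintype V] {G : SimpleGraph V}
    (h2 : ∀ S : Set V, S.ncard < 2 → (G.induce Sᶜ).Connected) (hn : 4 ≤ Fintype.card V) :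
    ∃ col : Sym2 V → ℕ, (∀ e, col e < 2) ∧
      ∀ u v, u ≠ v → Pth G col u v Set.univ {n | n < 2} := by
  classical
  have other : ∀ A : Finset V, A.card < 4 → ∃ x, x ∉ A := by
    intro A hA
    by_contra hcon
    push Not at hcon
    have : A = Finset.univ := Finset.eq_univ_of_forall hcon
    rw [this, Finset.card_univ] at hA
    omega
  have nb : ∀ x y z : V, x ≠ y → ∃ w, w ≠ y ∧ w ≠ x ∧ G.Adj x w := by
    intro x y z hxy
    obtain ⟨t, ht⟩ := other {x, y} (by have := Finset.card_le_two (a := x) (b := y); omega)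
    obtain ⟨a, b, ha, hb, hbS, hadj⟩ := boundary (h2 {y} (by simp)) {x} (x := x) (y := t) rfl
      (by rintro rfl; simp at ht) (by simpa using hxy) (by rintro rfl; simp at ht)
    obtain rfl : a = x := ha
    exact ⟨b, hbS, hb, hadj⟩
  have main : ∃ a b c d, G.Adj a b ∧ G.Adj c d ∧ a ≠ c ∧ a ≠ d ∧ b ≠ c ∧ b ≠ d := by
    obtain ⟨a, -⟩ := other ∅ (by simp)
    obtain ⟨y, hy⟩ := other {a} (by simp)
    obtain ⟨b, hb1, hb2, hab⟩ := nb a y a (by rintro rfl; simp at hy)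
    obtain ⟨c, hc⟩ := other {a, b} (by have := Finset.card_le_two (a := a) (b := b); omega)
    obtain ⟨d, hd⟩ := other {a, b, c}
      (by have := Finset.card_le_three (a := a) (b := b) (c := c); omega)
    simp only [Finset.mem_insert, Finset.mem_singleton, not_or] at hc hd
    obtain ⟨e, he1, he2, hce⟩ := nb c b c hc.2
    obtain ⟨f, hf1, hf2, hdf⟩ := nb d a d hd.1
    by_cases hea : e = a
    · by_cases hfb : f = b
      · subst hea hfb
        exact ⟨c, e, d, f, hce, hdf, Ne.symm hd.2.2, hc.2, Ne.symm hd.1, hab.ne⟩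
      · exact ⟨a, b, d, f, hab, hdf, Ne.symm hd.1, Ne.symm hf1, Ne.symm hd.2.1, Ne.symm hfb⟩
    · exact ⟨a, b, c, e, hab, hce, Ne.symm hc.1, Ne.symm hea, Ne.symm hc.2, Ne.symm he1⟩
  obtain ⟨a, b, c, d, hab, hcd, hac, had, hbc, hbd⟩ := main
  let col : Sym2 V → ℕ := fun e => if e = s(a, b) ∨ e = s(c, d) then 0 else 1
  refine ⟨col, ?_, ?_⟩
  · intro e
    simp only [col]
    split_ifs <;> omega
  · intro u v huv
    by_cases h : u ∈ ({a, b} : Set V) ∧ v ∈ ({a, b} : Set V)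
    · refine twoCase col h2 hcd (by simp [col]) ?_ huv ?_
      · intro x y hx hy
        simp only [col]
        rw [if_neg]
        simp only [Set.mem_insert_iff, Set.mem_singleton_iff, Sym2.eq_iff] at *
        grind
      · simp only [Set.mem_insert_iff, Set.mem_singleton_iff] at *
        grind
    · refine twoCase col h2 hab (by simp [col]) ?_ huv h
      intro x y hx hy
      simp only [col]
      rw [if_neg]
      simp only [Set.mem_insert_iff, Set.mem_singleton_iff, Sym2.eq_iff] at *
      grind

theorem fan {V : Type*} [Fintype V] {G : SimpleGraph V} {k : ℕ}
    (hk : ∀ S : Set V, S.ncard < k → (G.induce Sᶜ).Connected) (C : Set V) (r : V) (hr : r ∉ C)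
    (hC : k ≤ C.ncard) :
    ∃ (p : Fin k → ℕ → V) (m : Fin k → ℕ), (∀ i, p i 0 = r) ∧ (∀ i, 0 < m i) ∧
      (∀ i, p i (m i) ∈ C) ∧ (∀ i x, x < m i → p i x ∉ C ∧ G.Adj (p i x) (p i (x + 1))) ∧
      (∀ i x, 0 < x → x ≤ m i → p i x ≠ r) ∧
      (∀ i j x y, 0 < x → 0 < y → x ≤ m i → y ≤ m j → p i x = p j y → i = j ∧ x = y) := by
  classical
  let G' : SimpleGraph V :=
    { Adj := fun a b => G.Adj a b ∧ a ≠ r ∧ b ≠ r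
      symm := ⟨fun a b h => ⟨h.1.symm, h.2.2, h.2.1⟩⟩
      loopless := ⟨fun a h => G.irrefl h.1⟩ }
  obtain ⟨q, m, h0, hqC, hadj, hinj⟩ := link G' C (fun _ : Fin k => {w | G.Adj r w}) (by
    intro J X hX hJ
    have hJk : J.card ≤ k := by simpa using Finset.card_le_univ J
    let W : Finset V := {w | G.Adj r w ∨ w ∈ X ∨ ∃ x ∈ X, G'.Adj x w}
    have hW : ∀ w, w ∈ W ↔ G.Adj r w ∨ w ∈ X ∨ ∃ x ∈ X, G'.Adj x w := by
      intro w; simp [W]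
    refine ⟨W, ?_, fun w hw => ((hW w).1 hw).imp_left fun h => ⟨hJ.choose, hJ.choose_spec, h⟩⟩
    have hXW : X ⊆ W := fun y hy => (hW y).2 (Or.inr (Or.inl hy))
    have hcard := Finset.card_sdiff_add_card_eq_card hXW
    by_contra hcon
    have hlt : (W \ X).card < k := by omega
    have hconn := hk (↑(W \ X)) (by rwa [Set.ncard_coe_finset])
    have : ∃ y, y ∈ C ∧ y ∉ (W \ X) := by
      by_contra hno
      push Not at hno
      have h1 : C ⊆ ↑(W \ X) := fun y hy => by exact_mod_cast hno y hy
      have h2 := Set.ncard_le_ncard h1 (Finset.finite_toSet _)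
      rw [Set.ncard_coe_finset] at h2
      omega
    obtain ⟨y, hyC, hy⟩ := this
    have hrW : r ∉ W \ X := by
      intro h
      rw [Finset.mem_sdiff] at h
      rcases (hW r).1 h.1 with h1 | h1 | ⟨x, -, h1⟩
      · exact G.irrefl h1
      · exact h.2 h1
      · exact h1.2.2 rfl
    obtain ⟨e, g, he, hg, hgS, hadj⟩ := boundary hconn (insert r (X : Set V)) (x := r) (y := y)
      (by simp) (by
        rintro (h | h)
        · exact hr (h ▸ hyC)
        · exact hX y h hyC) (by exact_mod_cast hrW) (by exact_mod_cast hy)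
    apply hgS
    have hg' : g ≠ r ∧ g ∉ X := by
      simpa [not_or] using hg
    simp only [Finset.coe_sdiff, Set.mem_sdiff]
    refine ⟨(hW g).2 ?_, hg'.2⟩
    by_cases her : e = r
    · left; rwa [← her]
    · right; right
      refine ⟨e, ?_, hadj, her, hg'.1⟩
      rcases he with h | h
      · exact absurd h her
      · exact h)
  have hqr : ∀ i x, x ≤ m i → q i x ≠ r := by
    intro i x hx
    cases x with
    | zero => exact (h0 i : G.Adj r _).ne'
    | succ x => exact (hadj i x (by omega)).2.2.2
  refine ⟨fun i x => if x = 0 then r else q i (x - 1), fun i => m i + 1, ?_, ?_, ?_, ?_, ?_, ?_⟩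
  · intro i; simp
  · intro i; simp
  · intro i; simpa using hqC i
  · intro i x hx
    cases x with
    | zero => exact ⟨by simpa using hr, by simpa using h0 i⟩
    | succ x =>
      have := hadj i x (by simpa using hx)
      exact ⟨by simpa using this.1, by simpa using this.2.1⟩
  · intro i x hx hx'
    beta_reduce at hx'
    simp only [if_neg hx.ne']
    exact hqr i _ (by omega)
  · intro i j x y hx hy hx' hy' h
    beta_reduce at hx' hy'
    simp only [if_neg hx.ne', if_neg hy.ne'] at h
    have := hinj i j _ _ (by omega) (by omega) h
    exact ⟨this.1, by omega⟩

theorem longCycle {V : Type*} [Fintype V] {G : SimpleGraph V} {d : ℕ} (hd : 2 ≤ d) (r : V)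
    (hdeg : ∀ v, v ≠ r → ∀ S : Set V, (∀ w, w ≠ r → G.Adj v w → w ∈ S) → d ≤ S.ncard)
    (hv : ∃ v, v ≠ r) :
    ∃ (c : ℕ → V) (L : ℕ), d + 1 ≤ L ∧ (∀ t, c t ≠ r) ∧ (∀ t, G.Adj (c t) (c (t + 1))) ∧
      ∀ s t, c s = c t ↔ s % L = t % L := by
  classical
  let P : ℕ → Prop := fun m => ∃ q : ℕ → V, (∀ x, x ≤ m → q x ≠ r) ∧
    (∀ x, x < m → G.Adj (q x) (q (x + 1))) ∧ ∀ x y, x ≤ m → y ≤ m → q x = q y → x = y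
  have P0 : P 0 := by
    obtain ⟨v, hv⟩ := hv
    exact ⟨fun _ => v, fun _ _ => hv, fun x hx => by omega, fun x y hx hy _ => by omega⟩
  have Pb : ∀ m, P m → m ≤ Fintype.card V := by
    rintro m ⟨q, -, -, h⟩
    have := Finset.card_le_card_of_injOn (s := Finset.range (m+1)) (t := Finset.univ) q
      (by simp) (by
        intro x hx y hy hxy
        simp at hx hy
        exact h x y (by omega) (by omega) hxy)
    simp at this
    omega
  let m := Nat.findGreatest P (Fintype.card V)
  have hm : P m := Nat.findGreatest_spec (Nat.zero_le _) P0
  have hmax : ¬ P (m + 1) := by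
    intro h
    have := Nat.le_findGreatest (Pb _ h) h
    change m + 1 ≤ m at this
    omega
  obtain ⟨q, q1, q2, q3⟩ := hm
  have hnb : ∀ w, w ≠ r → G.Adj (q 0) w → ∃ x, 1 ≤ x ∧ x ≤ m ∧ q x = w := by
    intro w hw hadj
    by_contra hcon
    push Not at hcon
    apply hmax
    have hne : ∀ x ≤ m, q x ≠ w := by
      intro x hx
      rcases Nat.eq_zero_or_pos x with rfl | h
      · exact hadj.ne
      · exact hcon x h hx
    refine ⟨fun x => if x = 0 then w else q (x - 1), ?_, ?_, ?_⟩
    · intro x hx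
      beta_reduce
      split_ifs
      · exact hw
      · exact q1 _ (by omega)
    · intro x hx
      cases x with
      | zero => simpa using hadj.symm
      | succ x => simpa using q2 x (by omega)
    · intro x y hx hy h
      cases x with
      | zero =>
        cases y with
        | zero => rfl
        | succ y =>
          simp at h
          exact absurd h.symm (hne y (by omega))
      | succ x =>
        cases y with
        | zero =>
          simp at h
          exact absurd h (hne x (by omega))
        | succ y =>
          simp at h
          have := q3 x y (by omega) (by omega) h
          omega
  let D : Finset ℕ := (Finset.Icc 1 m).filter fun x => G.Adj (q 0) (q x)
  have hD : d ≤ D.card := by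
    have h1 := hdeg (q 0) (q1 0 (by omega)) (↑(D.image q)) (by
      intro w hw hadj
      obtain ⟨x, h1, h2, rfl⟩ := hnb w hw hadj
      simp only [Finset.coe_image]
      exact ⟨x, by simp [D, h1, h2, hadj], rfl⟩)
    rw [Set.ncard_coe_finset] at h1
    exact h1.trans Finset.card_image_le
  have hDne : D.Nonempty := Finset.card_pos.1 (by omega)
  obtain ⟨M, hM⟩ : ∃ M, M = D.max' hDne := ⟨_, rfl⟩
  have hMD : M ∈ D := hM ▸ D.max'_mem hDne
  have hMle : ∀ x ∈ D, x ≤ M := fun x hx => hM ▸ D.le_max' x hx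
  have hMd : d ≤ M := by
    have : D ⊆ Finset.Icc 1 M := by
      intro x hx
      have := hMle x hx
      simp only [D, Finset.mem_filter, Finset.mem_Icc] at hx ⊢
      omega
    have := Finset.card_le_card this
    simp at this
    omega
  simp only [D, Finset.mem_filter, Finset.mem_Icc] at hMD
  have hlt : ∀ t, t % (M + 1) ≤ M := fun t => by
    have := Nat.mod_lt t (show 0 < M + 1 by omega)
    omega
  refine ⟨fun t => q (t % (M + 1)), M + 1, by omega, ?_, ?_, ?_⟩
  · intro t
    exact q1 _ ((hlt t).trans (by omega))
  · intro t
    beta_reduce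
    have h := hlt t
    rcases h.lt_or_eq with h | h
    · have : (t + 1) % (M + 1) = t % (M + 1) + 1 := by
        rw [Nat.add_mod, Nat.mod_eq_of_lt (show 1 < M + 1 by omega), Nat.mod_eq_of_lt (by omega)]
      rw [this]
      exact q2 _ (by omega)
    · have : (t + 1) % (M + 1) = 0 := by
        rw [Nat.add_mod, Nat.mod_eq_of_lt (show 1 < M + 1 by omega), h, Nat.mod_self]
      rw [this, h]
      exact hMD.2.symm
  · intro s t
    beta_reduce
    constructor
    · intro h
      exact q3 _ _ ((hlt s).trans (by omega)) ((hlt t).trans (by omega)) h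
    · intro h
      rw [h]

/-- A subdivided wheel with its coloring. -/
structure Wheel {V : Type*} (G : SimpleGraph V) (col : Sym2 V → ℕ) (k : ℕ) (c : ℕ → V) (L : ℕ)
    (p : Fin k → ℕ → V) (m : Fin k → ℕ) (r : V) : Prop where
  L3 : 3 ≤ L
  cadj : ∀ t, G.Adj (c t) (c (t + 1))
  cinj : ∀ s t, c s = c t ↔ s % L = t % L
  p0 : ∀ i, p i 0 = r
  mpos : ∀ i, 0 < m i
  pC : ∀ i, ∃ t, c t = p i (m i)
  pnC : ∀ i x t, x < m i → p i x ≠ c t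
  padj : ∀ i x, x < m i → G.Adj (p i x) (p i (x + 1))
  pr : ∀ i x, 0 < x → x ≤ m i → p i x ≠ r
  pinj : ∀ i j x y, 0 < x → 0 < y → x ≤ m i → y ≤ m j → p i x = p j y → i = j ∧ x = y
  colc : ∀ t i, c t = p i (m i) → col s(c t, c (t + 1)) = i
  colp : ∀ i x, x < m i → col s(p i x, p i (x + 1)) = i

namespace Wheel

variable {V : Type*} {G : SimpleGraph V} {col : Sym2 V → ℕ} {k : ℕ} {c : ℕ → V} {L : ℕ}
  {p : Fin k → ℕ → V} {m : Fin k → ℕ} {r : V}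

theorem win (w : Wheel G col k c L p m r) {x y : ℕ} (h : c x = c y) (h1 : x < y + L)
    (h2 : y < x + L) : x = y := by
  have h := (w.cinj x y).1 h
  rcases le_total x y with hxy | hxy
  · have h3 : L ∣ y - x := (Nat.modEq_iff_dvd' hxy).1 h
    by_contra hne
    have := Nat.le_of_dvd (by omega) h3
    omega
  · have h3 : L ∣ x - y := (Nat.modEq_iff_dvd' hxy).1 h.symm
    by_contra hne
    have := Nat.le_of_dvd (by omega) h3
    omega

theorem shift (w : Wheel G col k c L p m r) (t : ℕ) : c (t + L) = c t :=
  (w.cinj _ _).2 (by simp)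

theorem find (w : Wheel G col k c L p m r) (t s : ℕ) : ∃ x, t ≤ x ∧ x < t + L ∧ c x = c s := by
  have hL := w.L3
  refine ⟨t + (s + (L - 1) * t) % L, by omega, ?_, ?_⟩
  · have := Nat.mod_lt (s + (L - 1) * t) (show 0 < L by omega)
    omega
  · rw [w.cinj, Nat.add_mod_mod]
    have : t + (s + (L - 1) * t) = s + L * t := by
      obtain ⟨l, rfl⟩ : ∃ l, L = l + 1 := ⟨L - 1, by omega⟩
      simp only [Nat.add_sub_cancel]
      ring
    rw [this]
    simp

theorem onto (w : Wheel G col k c L p m r) (t : ℕ) (i : Fin k) :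
    ∃ x, t ≤ x ∧ x < t + L ∧ c x = p i (m i) := by
  obtain ⟨s, hs⟩ := w.pC i
  rw [← hs]
  exact w.find t s

theorem ainj (w : Wheel G col k c L p m r) {i j : Fin k} (h : p i (m i) = p j (m j)) : i = j :=
  (w.pinj i j _ _ (w.mpos i) (w.mpos j) le_rfl le_rfl h).1

theorem pp (w : Wheel G col k c L p m r) {i j : Fin k} {x y : ℕ} (hx : x ≤ m i) (hy : y ≤ m j)
    (h : p i x = p j y) : (x = 0 ∧ y = 0) ∨ (i = j ∧ x = y) := by
  rcases Nat.eq_zero_or_pos x with rfl | hx0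
  · rcases Nat.eq_zero_or_pos y with rfl | hy0
    · exact Or.inl ⟨rfl, rfl⟩
    · rw [w.p0] at h
      exact absurd h.symm (w.pr j y hy0 hy)
  · rcases Nat.eq_zero_or_pos y with rfl | hy0
    · rw [w.p0] at h
      exact absurd h (w.pr i x hx0 hx)
    · exact Or.inr (w.pinj i j x y hx0 hy0 hx hy h)

theorem seg (w : Wheel G col k c L p m r) {t s : ℕ} (h : t ≤ s) (h' : s < t + L) :
    Pth G col (c t) (c s) {v | ∃ x, t ≤ x ∧ x ≤ s ∧ v = c x}
      {n | ∃ x i, t ≤ x ∧ x < s ∧ c x = p i (m i) ∧ n = i.1} := by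
  refine (Pth.seg c t s h (fun x _ _ => w.cadj x)
    (fun x y _ _ _ _ h => w.win h (by omega) (by omega))).mono le_rfl ?_
  rintro n ⟨x, i, h1, h2, h3, rfl⟩
  exact ⟨x, h1, h2, (w.colc x i h3).symm⟩

theorem stem (w : Wheel G col k c L p m r) (i : Fin k) {y z : ℕ} (h : y ≤ z) (hz : z ≤ m i) :
    Pth G col (p i y) (p i z) {v | ∃ x, y ≤ x ∧ x ≤ z ∧ v = p i x} {n | y < z ∧ n = i.1} := by
  refine (Pth.seg (p i) y z h (fun x _ hx => w.padj i x (by omega)) ?_).mono le_rfl ?_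
  · intro x x' h1 h2 h3 h4 he
    have := w.pp (i := i) (j := i) (by omega) (by omega) he
    omega
  · rintro n ⟨h1, rfl⟩
    exact ⟨y, le_rfl, h1, (w.colp i y (by omega)).symm⟩

theorem route (w : Wheel G col k c L p m r) {t e : ℕ} (he : e < t + L)
    (hf : ∃ s i, t ≤ s ∧ s ≤ e ∧ c s = p i (m i)) :
    ∃ i s, t ≤ s ∧ s ≤ e ∧ c s = p i (m i) ∧
      (∀ s' i', t ≤ s' → s' ≤ e → c s' = p i' (m i') → s' ≤ s) ∧
      ∀ y, y < m i → Pth G col (c t) (p i y)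
        {v | (∃ x, t ≤ x ∧ x ≤ e ∧ v = c x) ∨ ∃ x, y ≤ x ∧ x < m i ∧ v = p i x}
        {n | ∃ x i', t ≤ x ∧ x ≤ e ∧ c x = p i' (m i') ∧ n = i'.1} := by
  classical
  let P : ℕ → Prop := fun s => t ≤ s ∧ ∃ i, c s = p i (m i)
  obtain ⟨s0, i0, h1, h2, h3⟩ := hf
  have hs : P (Nat.findGreatest P e) := Nat.findGreatest_spec (P := P) h2 ⟨h1, i0, h3⟩
  have hle : Nat.findGreatest P e ≤ e := Nat.findGreatest_le e
  have hmax : ∀ s' i', t ≤ s' → s' ≤ e → c s' = p i' (m i') → s' ≤ Nat.findGreatest P e :=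
    fun s' i' a b d => Nat.le_findGreatest b ⟨a, i', d⟩
  generalize Nat.findGreatest P e = s at *
  obtain ⟨hts, i, hi⟩ := hs
  refine ⟨i, s, hts, hle, hi, hmax, ?_⟩
  intro y hy
  have g1 := w.seg hts (by omega)
  have g2 := (w.stem i hy.le le_rfl).symm
  rw [hi] at g1
  refine (g1.glue g2 ?_).mono ?_ ?_
  · rintro x ⟨a, ha1, ha2, rfl⟩ ⟨b, hb1, hb2, hb⟩
    rcases hb2.lt_or_eq with h | h
    · exact absurd hb.symm (w.pnC i b a h)
    · rw [hb, h]
  · rintro x (⟨a, ha1, ha2, rfl⟩ | ⟨b, hb1, hb2, rfl⟩)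
    · exact Or.inl ⟨a, ha1, by omega, rfl⟩
    · rcases hb2.lt_or_eq with h | h
      · exact Or.inr ⟨b, hb1, h, rfl⟩
      · exact Or.inl ⟨s, hts, hle, by rw [h, hi]⟩
  · rintro n ⟨x, i', hx1, hx2, hx3, rfl⟩
    have := hmax x i' hx1 hx2 hx3
    rcases this.lt_or_eq with h | h
    · exact Or.inl ⟨x, i', hx1, h, hx3, rfl⟩
    · subst h
      have : i = i' := w.ainj (hi.symm.trans hx3)
      subst this
      exact Or.inr ⟨hy, rfl⟩

theorem allc (w : Wheel G col k c L p m r) (t : ℕ) {n : ℕ} (hn : n < k) :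
    ∃ x i, t ≤ x ∧ x < t + L ∧ c x = p i (m i) ∧ n = i.1 := by
  obtain ⟨x, h1, h2, h3⟩ := w.onto t ⟨n, hn⟩
  exact ⟨x, _, h1, h2, h3, rfl⟩

/-- Vertices of the wheel. -/
def verts (c : ℕ → V) (p : Fin k → ℕ → V) (m : Fin k → ℕ) : Set V :=
  {v | (∃ t, v = c t) ∨ ∃ i x, x < m i ∧ v = p i x}

theorem cc1 (w : Wheel G col k c L p m r) {t t' : ℕ} (h : t < t') (h' : t' < t + L)
    (f1 : ∃ s i, t ≤ s ∧ s ≤ t' - 1 ∧ c s = p i (m i))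
    (f2 : ∃ s i, t' ≤ s ∧ s ≤ t + L - 1 ∧ c s = p i (m i)) :
    Pth G col (c t) (c t') (verts c p m) {n | n < k} := by
  obtain ⟨i, s, a1, a2, a3, -, a5⟩ := w.route (by omega) f1
  obtain ⟨j, s', b1, b2, b3, -, b5⟩ := w.route (by omega) f2
  have hij : i ≠ j := by
    rintro rfl
    have := w.win (a3.trans b3.symm) (by omega) (by omega)
    omega
  have a5 := a5 0 (w.mpos i)
  have b5 := b5 0 (w.mpos j)
  rw [w.p0] at a5 b5
  refine (a5.glue b5.symm ?_).mono ?_ ?_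
  · rintro x (⟨a, ha1, ha2, rfl⟩ | ⟨a, ha1, ha2, rfl⟩) (⟨b, hb1, hb2, hb⟩ | ⟨b, hb1, hb2, hb⟩)
    · have := w.win hb (by omega) (by omega)
      omega
    · exact absurd hb.symm (w.pnC _ _ _ hb2)
    · exact absurd hb (w.pnC _ _ _ ha2)
    · rcases w.pp ha2.le hb2.le hb with h | h
      · rw [h.1, w.p0]
      · exact absurd h.1 hij
  · rintro x ((⟨a, ha1, ha2, rfl⟩ | ⟨a, ha1, ha2, rfl⟩) | (⟨a, ha1, ha2, rfl⟩ | ⟨a, ha1, ha2, rfl⟩))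
    · exact Or.inl ⟨_, rfl⟩
    · exact Or.inr ⟨_, _, ha2, rfl⟩
    · exact Or.inl ⟨_, rfl⟩
    · exact Or.inr ⟨_, _, ha2, rfl⟩
  · intro n hn
    obtain ⟨x, l, h1, h2, h3, rfl⟩ := w.allc t hn
    rcases Nat.lt_or_ge x t' with hx | hx
    · exact Or.inl ⟨x, l, h1, by omega, h3, rfl⟩
    · exact Or.inr ⟨x, l, hx, by omega, h3, rfl⟩

theorem cc2 (w : Wheel G col k c L p m r) (hk : 3 ≤ k) {t t' : ℕ} (h : t < t') (h' : t' < t + L)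
    (f1 : ¬ ∃ s i, t ≤ s ∧ s ≤ t' - 1 ∧ c s = p i (m i)) :
    Pth G col (c t) (c t') (verts c p m) {n | n < k} := by
  have f : ∀ j, ∃ s, t' ≤ s ∧ s ≤ t + L - 1 ∧ c s = p j (m j) := by
    intro j
    obtain ⟨s, h1, h2, h3⟩ := w.onto t j
    refine ⟨s, ?_, by omega, h3⟩
    by_contra hcon
    exact f1 ⟨s, j, h1, by omega, h3⟩
  obtain ⟨i, s, a1, a2, a3, a4, -⟩ := w.route (t := t') (e := t + L - 1) (by omega) (by
    obtain ⟨s, hs⟩ := f ⟨0, by omega⟩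
    exact ⟨s, _, hs⟩)
  obtain ⟨j0, hj0⟩ : ∃ j : Fin k, j ≠ i := by
    have : Nontrivial (Fin k) := Fin.nontrivial_iff_two_le.2 (by omega)
    exact exists_ne i
  obtain ⟨s0, c1, c2, c3⟩ := f j0
  have c4 := a4 s0 j0 c1 c2 c3
  have c5 : s0 ≠ s := by
    rintro rfl
    exact hj0 (w.ainj (c3.symm.trans a3))
  obtain ⟨j, s', b1, b2, b3, -, b5⟩ := w.route (t := t') (e := s - 1) (by omega)
    ⟨s0, j0, c1, by omega, c3⟩
  have hij : i ≠ j := by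
    rintro rfl
    have := w.win (a3.trans b3.symm) (by omega) (by omega)
    omega
  have b5 := b5 0 (w.mpos j)
  have g1 := (w.seg (t := s) (s := t + L) (by omega) (by omega)).symm
  have g2 := (w.stem i (Nat.zero_le _) le_rfl).symm
  rw [w.p0] at b5 g2
  rw [w.shift, a3] at g1
  refine ((g1.glue g2 ?_).glue b5.symm ?_).mono ?_ ?_
  · rintro x ⟨a, ha1, ha2, rfl⟩ ⟨b, hb1, hb2, hb⟩
    rcases hb2.lt_or_eq with h | h
    · exact absurd hb.symm (w.pnC i b a h)
    · rw [hb, h]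
  · rintro x (⟨a, ha1, ha2, rfl⟩ | ⟨a, ha1, ha2, rfl⟩) (⟨b, hb1, hb2, hb⟩ | ⟨b, hb1, hb2, hb⟩)
    · have := w.win hb (by omega) (by omega)
      omega
    · exact absurd hb.symm (w.pnC _ _ _ hb2)
    · rcases ha2.lt_or_eq with h | h
      · exact absurd hb (w.pnC _ _ _ h)
      · rw [h, ← a3] at hb
        have := w.win hb (by omega) (by omega)
        omega
    · rcases w.pp ha2 hb2.le hb with h | h
      · rw [h.1, w.p0]
      · exact absurd h.1 hij
  · rintro x ((⟨a, ha1, ha2, rfl⟩ | ⟨a, ha1, ha2, rfl⟩) | (⟨a, ha1, ha2, rfl⟩ | ⟨a, ha1, ha2, rfl⟩))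
    · exact Or.inl ⟨_, rfl⟩
    · rcases ha2.lt_or_eq with h | h
      · exact Or.inr ⟨_, _, h, rfl⟩
      · exact Or.inl ⟨s, by rw [h, a3]⟩
    · exact Or.inl ⟨_, rfl⟩
    · exact Or.inr ⟨_, _, ha2, rfl⟩
  · intro n hn
    obtain ⟨x, h1, h2, h3⟩ := f ⟨n, hn⟩
    rcases Nat.lt_or_ge x s with hx | hx
    · exact Or.inr ⟨x, _, h1, by omega, h3, rfl⟩
    · exact Or.inl (Or.inl ⟨x, _, hx, by omega, h3, rfl⟩)

theorem cc (w : Wheel G col k c L p m r) (hk : 3 ≤ k) {t t' : ℕ} (hne : c t ≠ c t') :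
    Pth G col (c t) (c t') (verts c p m) {n | n < k} := by
  obtain ⟨s, h1, h2, h3⟩ := w.find t t'
  rw [← h3] at hne ⊢
  have hts : t < s := by
    rcases h1.lt_or_eq with h | h
    · exact h
    · exact absurd (by rw [h]) hne
  by_cases f1 : ∃ x i, t ≤ x ∧ x ≤ s - 1 ∧ c x = p i (m i)
  · by_cases f2 : ∃ x i, s ≤ x ∧ x ≤ t + L - 1 ∧ c x = p i (m i)
    · exact w.cc1 hts h2 f1 f2
    · have := w.cc2 hk (t := s) (t' := t + L) (by omega) (by omega) f2
      rw [w.shift] at this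
      exact this.symm
  · exact w.cc2 hk hts h2 f1

theorem cp (w : Wheel G col k c L p m r) (t : ℕ) (j : Fin k) {y : ℕ} (hy : y < m j) :
    Pth G col (c t) (p j y) (verts c p m) {n | n < k} := by
  have hL := w.L3
  obtain ⟨s0, h1, h2, h3⟩ := w.onto t j
  obtain ⟨i, s, a1, a2, a3, a4, a5⟩ := w.route (t := t) (e := t + L - 1) (by omega)
    ⟨s0, j, h1, by omega, h3⟩
  by_cases hij : i = j
  · subst hij
    refine (a5 y hy).mono ?_ ?_
    · rintro x (⟨a, ha1, ha2, rfl⟩ | ⟨a, ha1, ha2, rfl⟩)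
      · exact Or.inl ⟨_, rfl⟩
      · exact Or.inr ⟨_, _, ha2, rfl⟩
    · intro n hn
      obtain ⟨x, l, h1, h2, h3, rfl⟩ := w.allc t hn
      exact ⟨x, l, h1, by omega, h3, rfl⟩
  · have g1 := a5 0 (w.mpos i)
    have g2 := w.stem j (Nat.zero_le y) hy.le
    rw [w.p0] at g1 g2
    refine (g1.glue g2 ?_).mono ?_ ?_
    · rintro x (⟨a, ha1, ha2, rfl⟩ | ⟨a, ha1, ha2, rfl⟩) ⟨b, hb1, hb2, hb⟩
      · exact absurd hb.symm (w.pnC _ _ _ (by omega))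
      · rcases w.pp ha2.le (by omega) hb with h | h
        · rw [h.1, w.p0]
        · exact absurd h.1 hij
    · rintro x ((⟨a, ha1, ha2, rfl⟩ | ⟨a, ha1, ha2, rfl⟩) | ⟨a, ha1, ha2, rfl⟩)
      · exact Or.inl ⟨_, rfl⟩
      · exact Or.inr ⟨_, _, ha2, rfl⟩
      · exact Or.inr ⟨_, _, by omega, rfl⟩
    · intro n hn
      obtain ⟨x, l, h1, h2, h3, rfl⟩ := w.allc t hn
      exact Or.inl ⟨x, l, h1, by omega, h3, rfl⟩

theorem pp1 (w : Wheel G col k c L p m r) (hk : 3 ≤ k) {i j : Fin k} {x y t : ℕ} (hx : x < m i)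
    (hx0 : 0 < x) (hy : y < m j) (ht : c t = p i (m i)) (hij : j = i → y < x)
    (hl : ∀ s, t < s → s < t + L → c s = p j (m j) →
      ∃ s' i', s < s' ∧ s' < t + L ∧ c s' = p i' (m i')) :
    Pth G col (p i x) (p j y) (verts c p m) {n | n < k} := by
  have hL := w.L3
  obtain ⟨j0, hj0⟩ : ∃ j : Fin k, j ≠ i := by
    have : Nontrivial (Fin k) := Fin.nontrivial_iff_two_le.2 (by omega)
    exact exists_ne i
  obtain ⟨s0, h1, h2, h3⟩ := w.onto t j0
  have h4 : s0 ≠ t := by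
    rintro rfl
    exact hj0 (w.ainj (h3.symm.trans ht))
  obtain ⟨l, s, a1, a2, a3, a4, a5⟩ := w.route (t := t + 1) (e := t + L - 1) (by omega)
    ⟨s0, j0, by omega, by omega, h3⟩
  have hli : l ≠ i := by
    rintro rfl
    have := w.win (a3.trans ht.symm) (by omega) (by omega)
    omega
  have hlj : l ≠ j := by
    rintro rfl
    obtain ⟨s', i', b1, b2, b3⟩ := hl s (by omega) (by omega) a3
    have := a4 s' i' (by omega) (by omega) b3
    omega
  have g1 := w.stem i hx.le le_rfl
  have g2 := w.seg (t := t) (s := t + 1) (by omega) (by omega)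
  have g3 := a5 0 (w.mpos l)
  have g4 := w.stem j (Nat.zero_le y) hy.le
  rw [w.p0] at g3 g4
  rw [ht] at g2
  refine (((g1.glue g2 ?_).glue g3 ?_).glue g4 ?_).mono ?_ ?_
  · rintro z ⟨a, ha1, ha2, rfl⟩ ⟨b, hb1, hb2, hb⟩
    rcases ha2.lt_or_eq with h | h
    · exact absurd hb (w.pnC _ _ _ h)
    · rw [h]
  · rintro z (⟨a, ha1, ha2, rfl⟩ | ⟨a, ha1, ha2, rfl⟩) (⟨b, hb1, hb2, hb⟩ | ⟨b, hb1, hb2, hb⟩)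
    · rcases ha2.lt_or_eq with h | h
      · exact absurd hb (w.pnC _ _ _ h)
      · rw [h, ← ht] at hb
        have := w.win hb (by omega) (by omega)
        omega
    · rcases w.pp ha2 hb2.le hb with h | h
      · omega
      · exact absurd h.1.symm hli
    · have := w.win hb (by omega) (by omega)
      rw [this, show b = t + 1 by omega]
    · exact absurd hb.symm (w.pnC _ _ _ hb2)
  · rintro z ((⟨a, ha1, ha2, rfl⟩ | ⟨a, ha1, ha2, rfl⟩) | (⟨a, ha1, ha2, rfl⟩ | ⟨a, ha1, ha2, rfl⟩))
      ⟨b, hb1, hb2, hb⟩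
    · rcases w.pp ha2 (by omega) hb with h | h
      · omega
      · have := hij h.1.symm
        omega
    · exact absurd hb.symm (w.pnC _ _ _ (by omega))
    · exact absurd hb.symm (w.pnC _ _ _ (by omega))
    · rcases w.pp ha2.le (by omega) hb with h | h
      · rw [h.1, w.p0]
      · exact absurd h.1 hlj
  · rintro z (((⟨a, ha1, ha2, rfl⟩ | ⟨a, ha1, ha2, rfl⟩) |
      (⟨a, ha1, ha2, rfl⟩ | ⟨a, ha1, ha2, rfl⟩)) | ⟨a, ha1, ha2, rfl⟩)
    · rcases ha2.lt_or_eq with h | h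
      · exact Or.inr ⟨_, _, h, rfl⟩
      · exact Or.inl ⟨t, by rw [h, ht]⟩
    · exact Or.inl ⟨_, rfl⟩
    · exact Or.inl ⟨_, rfl⟩
    · exact Or.inr ⟨_, _, ha2, rfl⟩
    · exact Or.inr ⟨_, _, by omega, rfl⟩
  · intro n hn
    obtain ⟨z, i', h1, h2, h3, rfl⟩ := w.allc t hn
    rcases h1.lt_or_eq with h | h
    · exact Or.inl (Or.inr ⟨z, i', by omega, by omega, h3, rfl⟩)
    · subst h
      have : i = i' := w.ainj (ht.symm.trans h3)
      subst this
      exact Or.inl (Or.inl (Or.inl ⟨hx, rfl⟩))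

theorem pp2 (w : Wheel G col k c L p m r) (hk : 3 ≤ k) {i : Fin k} {x y : ℕ} (hx : x < m i)
    (hyx : y < x) : Pth G col (p i x) (p i y) (verts c p m) {n | n < k} := by
  obtain ⟨t, ht⟩ := w.pC i
  refine w.pp1 hk hx (by omega) (by omega) ht (fun _ => hyx) ?_
  intro s h1 h2 h3
  have := w.win (h3.trans ht.symm) (by omega) (by omega)
  omega

theorem pp3 (w : Wheel G col k c L p m r) (hk : 3 ≤ k) {i j : Fin k} {x y : ℕ} (hx : x < m i)
    (hy : y < m j) (hne : p i x ≠ p j y) :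
    Pth G col (p i x) (p j y) (verts c p m) {n | n < k} := by
  rcases Nat.eq_zero_or_pos x with rfl | hx0
  · have hy0 : 0 < y := by
      rcases Nat.eq_zero_or_pos y with rfl | h
      · rw [w.p0, w.p0] at hne
        exact absurd rfl hne
      · exact h
    rw [w.p0, ← w.p0 j]
    exact (w.pp2 hk hy hy0).symm
  rcases Nat.eq_zero_or_pos y with rfl | hy0
  · rw [w.p0, ← w.p0 i]
    exact w.pp2 hk hx hx0
  by_cases hij : i = j
  · subst hij
    rcases lt_trichotomy x y with h | h | h
    · exact (w.pp2 hk hy h).symm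
    · exact absurd (by rw [h]) hne
    · exact w.pp2 hk hx h
  obtain ⟨t, ht⟩ := w.pC i
  by_cases hl : ∀ s, t < s → s < t + L → c s = p j (m j) →
      ∃ s' i', s < s' ∧ s' < t + L ∧ c s' = p i' (m i')
  · exact w.pp1 hk hx hx0 hy ht (fun h => absurd h.symm hij) hl
  · push Not at hl
    obtain ⟨s, s1, s2, s3, s4⟩ := hl
    refine (w.pp1 hk hy hy0 hx s3 (fun h => absurd h hij) ?_).symm
    intro z z1 z2 z3
    have hz : z = t + L := w.win (z3.trans (ht.symm.trans (w.shift t).symm)) (by omega) (by omega)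
    obtain ⟨l, hl⟩ : ∃ l : Fin k, l ∉ ({i, j} : Finset (Fin k)) := by
      by_contra hcon
      push Not at hcon
      have h1 : ({i, j} : Finset (Fin k)) = Finset.univ := Finset.eq_univ_of_forall hcon
      have h2 := Finset.card_le_two (a := i) (b := j)
      rw [h1, Finset.card_univ, Fintype.card_fin] at h2
      omega
    simp only [Finset.mem_insert, Finset.mem_singleton, not_or] at hl
    obtain ⟨q, q1, q2, q3⟩ := w.onto t l
    have e1 : q ≠ t := by
      rintro rfl
      exact hl.1 (w.ainj (q3.symm.trans ht))
    have e2 : q ≠ s := by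
      rintro rfl
      exact hl.2 (w.ainj (q3.symm.trans s3))
    have e3 : q < s := by
      by_contra hcon
      exact s4 q l (by omega) q2 q3
    exact ⟨q + L, l, by omega, by omega, by rw [w.shift, q3]⟩

theorem all (w : Wheel G col k c L p m r) (hk : 3 ≤ k) {u v : V} (hu : u ∈ verts c p m)
    (hv : v ∈ verts c p m) (huv : u ≠ v) : Pth G col u v (verts c p m) {n | n < k} := by
  rcases hu with ⟨t, rfl⟩ | ⟨i, x, hx, rfl⟩ <;> rcases hv with ⟨t', rfl⟩ | ⟨j, y, hy, rfl⟩
  · exact w.cc hk huv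
  · exact w.cp t j hy
  · exact (w.cp t' i hx).symm
  · exact w.pp3 hk hx hy huv

end Wheel

theorem wheelExists {V : Type*} [Fintype V] {G : SimpleGraph V} {k : ℕ} (hk3 : 3 ≤ k)
    (hcard : k < Fintype.card V)
    (hk : ∀ S : Set V, S.ncard < k → (G.induce Sᶜ).Connected) :
    ∃ (col : Sym2 V → ℕ) (c : ℕ → V) (L : ℕ) (p : Fin k → ℕ → V) (m : Fin k → ℕ) (r : V),
      (∀ e, col e < k) ∧ Wheel G col k c L p m r := by
  classical
  have : Nontrivial V := Fintype.one_lt_card_iff_nontrivial.1 (by omega)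
  obtain ⟨r, v, hrv⟩ := exists_pair_ne V
  obtain ⟨c, L, hL, hcr, cadj, cinj⟩ := longCycle (G := G) (d := k - 1) (by omega) r (by
    intro v hv S hS
    by_contra hcon
    have hcon : S.ncard < k - 1 := by omega
    have h1 : (insert r (S \ {v})).ncard ≤ S.ncard + 1 :=
      (Set.ncard_insert_le _ _).trans (by
        have := Set.ncard_le_ncard (s := S \ {v}) (t := S) Set.sdiff_subset (Set.toFinite _)
        omega)
    have h2 : (insert v (insert r (S \ {v}))).ncard ≤ S.ncard + 2 :=
      (Set.ncard_insert_le _ _).trans (by omega)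
    obtain ⟨y, hy⟩ : ∃ y, y ∉ insert v (insert r (S \ {v})) := by
      by_contra hno
      push Not at hno
      rw [Set.eq_univ_of_forall hno, Set.ncard_univ, Nat.card_eq_fintype_card] at h2
      omega
    obtain ⟨a, b, ha, hb, hbS, hadj⟩ := boundary (hk (insert r (S \ {v})) (by omega)) {v}
      (x := v) (y := y) rfl (fun h => hy (Or.inl h)) (by simp [hv]) (fun h => hy (Or.inr h))
    obtain rfl : a = v := ha
    have hbr : b ≠ r := fun h => hbS (Or.inl h)
    exact hbS (Or.inr ⟨hS b hbr hadj, hb⟩)) ⟨v, hrv.symm⟩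
  have hCn : k ≤ (Set.range c).ncard := by
    have h1 : ((Finset.range L).image c).card = L := by
      rw [Finset.card_image_of_injOn, Finset.card_range]
      intro x hx y hy h
      simp at hx hy
      have := (cinj x y).1 h
      rwa [Nat.mod_eq_of_lt hx, Nat.mod_eq_of_lt hy] at this
    have h2 : (((Finset.range L).image c : Finset V) : Set V) ⊆ Set.range c := by
      intro x hx
      simp at hx
      obtain ⟨y, -, rfl⟩ := hx
      exact ⟨y, rfl⟩
    have h3 := Set.ncard_le_ncard h2 (Set.toFinite _)
    rw [Set.ncard_coe_finset, h1] at h3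
    omega
  obtain ⟨p, m, p0, mpos, pC, padj, pr, pinj⟩ := fan hk (Set.range c) r
    (by rintro ⟨t, ht⟩; exact hcr t ht) hCn
  have pnC : ∀ i x t, x < m i → p i x ≠ c t := fun i x t hx h => (padj i x hx).1 ⟨t, h.symm⟩
  let P1 : Sym2 V → Fin k → Prop := fun e i => ∃ t, e = s(c t, c (t + 1)) ∧ c t = p i (m i)
  let P2 : Sym2 V → Fin k → Prop := fun e i => ∃ x, x < m i ∧ e = s(p i x, p i (x + 1))
  let P : Sym2 V → Fin k → Prop := fun e i => P1 e i ∨ P2 e i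
  have hP : ∀ e i j, P e i → P e j → i = j := by
    have h12 : ∀ e i j, P1 e i → P2 e j → i = j := by
      rintro e i j ⟨t, rfl, h⟩ ⟨x, hx, he⟩
      rw [Sym2.eq_iff] at he
      rcases he with ⟨h1, h2⟩ | ⟨h1, h2⟩
      · exact absurd h1.symm (pnC _ _ _ hx)
      · exact absurd h2.symm (pnC _ _ _ hx)
    rintro e i j (h | h) (h' | h')
    · obtain ⟨t, rfl, h⟩ := h
      obtain ⟨s, he, h'⟩ := h'
      have hts : c t = c s := by
        rw [Sym2.eq_iff] at he
        rcases he with ⟨h1, h2⟩ | ⟨h1, h2⟩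
        · exact h1
        · exfalso
          have e1 : (s + 1 + 1) ≡ s [MOD L] := by
            have a1 : t ≡ s + 1 [MOD L] := (cinj _ _).1 h1
            have a2 : t + 1 ≡ s [MOD L] := (cinj _ _).1 h2
            exact (a1.symm.add_right 1).trans a2
          have e2 := (Nat.modEq_iff_dvd' (by omega)).1 e1.symm
          rw [show s + 1 + 1 - s = 2 by omega] at e2
          have := Nat.le_of_dvd (by omega) e2
          omega
      exact (pinj i j _ _ (mpos i) (mpos j) le_rfl le_rfl (h.symm.trans (hts.trans h'))).1
    · exact h12 _ _ _ h h'
    · exact (h12 _ _ _ h' h).symm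
    · obtain ⟨x, hx, rfl⟩ := h
      obtain ⟨y, hy, he⟩ := h'
      rw [Sym2.eq_iff] at he
      rcases he with ⟨h1, h2⟩ | ⟨h1, h2⟩
      · exact (pinj i j _ _ (by omega) (by omega) (by omega) (by omega) h2).1
      · have hy0 : 0 < y := by
          rcases Nat.eq_zero_or_pos y with rfl | h
          · rw [p0] at h2
            exact absurd h2 (pr i (x + 1) (by omega) (by omega))
          · exact h
        exact (pinj i j _ _ (by omega) hy0 (by omega) (by omega) h2).1
  let col : Sym2 V → ℕ := fun e => if h : ∃ i, P e i then (h.choose : ℕ) else 0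
  have hcol : ∀ e i, P e i → col e = i := by
    intro e i h
    have h' : ∃ i, P e i := ⟨i, h⟩
    simp only [col]
    rw [dif_pos h', hP e _ _ h'.choose_spec h]
  refine ⟨col, c, L, p, m, r, ?_, ?_⟩
  · intro e
    simp only [col]
    split_ifs
    · exact Fin.is_lt _
    · omega
  · exact
    { L3 := by omega
      cadj := cadj
      cinj := cinj
      p0 := p0
      mpos := mpos
      pC := pC
      pnC := pnC
      padj := fun i x h => (padj i x h).2
      pr := pr
      pinj := pinj
      colc := fun t i h => hcol _ _ (Or.inl ⟨t, rfl, h⟩)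
      colp := fun i x h => hcol _ _ (Or.inr ⟨x, h, rfl⟩) }

theorem colExists {V : Type*} [Fintype V] (G : SimpleGraph V) (k : ℕ) (hk : 2 ≤ k)
    (hn : 4 ≤ Fintype.card V) (hG : G.IsKConnectedGraph k) :
    ∃ col : Sym2 V → ℕ, (∀ e, col e < k) ∧
      ∀ u v, u ≠ v → Pth G col u v Set.univ {n | n < k} := by
  obtain ⟨hc, hS⟩ := hG
  rw [Nat.card_eq_fintype_card] at hc
  have hS : ∀ S : Set V, S.ncard < k → (G.induce Sᶜ).Connected := fun S h => hS S S.toFinite h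
  rcases hk.lt_or_eq with h | rfl
  · obtain ⟨col, c, L, p, m, r, hlt, w⟩ := wheelExists h hc hS
    refine ⟨col, hlt, fun u v huv => ?_⟩
    exact extend col (fun S hS' => hS S (by omega)) (Wheel.verts c p m) (a := c 0) (b := c 1)
      (Or.inl ⟨_, rfl⟩) (Or.inl ⟨_, rfl⟩) (w.cadj 0).ne {n | n < k}
      (fun x y hx hy hxy => w.all h hx hy hxy) huv
  · exact caseTwo hS hn

theorem stmt_12 {V : Type*} [Fintype V] (G : SimpleGraph V) (k : ℕ) (hk : 2 ≤ k)
    (hn : 4 ≤ Fintype.card V) (hG : G.IsKConnectedGraph k) :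
    G.KColorConnectable k ∧ G.ccConn k = k := by
  classical
  obtain ⟨col, hlt, hp⟩ := colExists G k hk hn hG
  have hcc : G.IsKColorConnecting k col := by
    intro u v huv
    obtain ⟨p, h1, -, h3⟩ := hp u v huv
    refine ⟨p, h1, ?_⟩
    have : Finset.range k ⊆ (p.edges.map col).toFinset := by
      intro n hn
      obtain ⟨e, he, hc⟩ := h3 n (by simpa using hn)
      simp only [List.mem_toFinset, List.mem_map]
      exact ⟨e, he, hc⟩
    simpa using Finset.card_le_card this
  refine ⟨⟨col, hcc⟩, ?_⟩
  have lower : ∀ c : Sym2 V → ℕ, G.IsKColorConnecting k c → k ≤ (c '' G.edgeSet).ncard := by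
    intro c hc
    have : Nontrivial V := Fintype.one_lt_card_iff_nontrivial.1 (by omega)
    obtain ⟨u, v, huv⟩ := exists_pair_ne V
    obtain ⟨p, -, h⟩ := hc u v huv
    refine h.trans ?_
    rw [← Set.ncard_coe_finset]
    refine Set.ncard_le_ncard ?_ (Set.toFinite _)
    intro n hn
    simp only [List.coe_toFinset, List.mem_map, Set.mem_ofPred_eq] at hn
    obtain ⟨e, he, rfl⟩ := hn
    exact ⟨e, p.edges_subset_edgeSet he, rfl⟩
  have upper : (col '' G.edgeSet).ncard ≤ k := by
    have h : col '' G.edgeSet ⊆ ↑(Finset.range k) := by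
      rintro n ⟨e, -, rfl⟩
      simpa using hlt e
    have := Set.ncard_le_ncard h (Finset.finite_toSet _)
    rwa [Set.ncard_coe_finset, Finset.card_range] at this
  have hne : {n : ℕ | ∃ c : Sym2 V → ℕ, G.IsKColorConnecting k c ∧
      (c '' G.edgeSet).ncard = n}.Nonempty := ⟨_, col, hcc, rfl⟩
  have hmem : (col '' G.edgeSet).ncard ∈ {n : ℕ | ∃ c : Sym2 V → ℕ, G.IsKColorConnecting k c ∧
      (c '' G.edgeSet).ncard = n} := ⟨col, hcc, rfl⟩
  unfold SimpleGraph.ccConn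
  apply le_antisymm
  · exact (Nat.sInf_le hmem).trans upper
  · obtain ⟨c, h1, h2⟩ := Nat.sInf_mem hne
    rw [← h2]
    exact lower c h1
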